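/- Let p(z) = a_n z^n + ⋯ + a_1 z + 1 be a complex polynomial of degree n with constant term 1 and a_n ≠ 0, let ρ_min be the least of the moduli of the roots of p, and let b_k denote the coefficient of z^k in the Maclaurin series of 1/p(z). Then for every k ≥ 0, |b_k| ≤ C(n+k−1, k) · ρ_min^{−k}, where C(n+k−1, k) is the binomial coefficient. -/

import Mathlib

open Polynomial

/-- The minimum of the moduli of the roots of `p`. -/
noncomputable def rhoMin (p : Polynomial ℂ) : ℝ :=
  sInf {x : ℝ | ∃ ρ : ℂ, p.eval ρ = 0 ∧ x = ‖ρ‖}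

/-!
Writing `p = ∏ (1 - ρ⁻¹ z)` over the roots `ρ` of `p`, one divides by one linear factor at a time.
If `(1 - a z) F = G` with `‖a‖ ≤ c`, the coefficients satisfy `F_{k+1} = G_{k+1} + a F_k`, so bounds
`‖G_k‖ ≤ B(n, k) c ^ k` pass to `‖F_k‖ ≤ B(n + 1, k) c ^ k` as soon as
`B(n + 1, k + 1) = B(n, k + 1) + B(n + 1, k)`. The multiset coefficients
`B(n, k) = (n + k - 1).choose k` satisfy exactly this form of Pascal's rule.
-/

section NormedRing

variable {R : Type*} [SeminormedCommRing R] {c : ℝ}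

lemma norm_coeff_le_multichoose_succ_of_one_sub_mul {a : R} (ha : ‖a‖ ≤ c) {n : ℕ}
    {F : PowerSeries R}
    (hF : ∀ k, ‖PowerSeries.coeff k ((1 - PowerSeries.C a * PowerSeries.X) * F)‖ ≤
      n.multichoose k * c ^ k) (k : ℕ) :
    ‖PowerSeries.coeff k F‖ ≤ (n + 1).multichoose k * c ^ k := by
  induction k with
  | zero => simpa [sub_mul, mul_assoc] using hF 0
  | succ k ih =>
    set G := (1 - PowerSeries.C a * PowerSeries.X) * F with hG
    have recurrence : PowerSeries.coeff (k + 1) F =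
        PowerSeries.coeff (k + 1) G + a * PowerSeries.coeff k F := by
      simp [hG, sub_mul, mul_assoc, PowerSeries.coeff_succ_X_mul]
    calc ‖PowerSeries.coeff (k + 1) F‖
        ≤ ‖PowerSeries.coeff (k + 1) G‖ + ‖a‖ * ‖PowerSeries.coeff k F‖ := by
          rw [recurrence]
          exact norm_add_le_of_le le_rfl (norm_mul_le _ _)
      _ ≤ n.multichoose (k + 1) * c ^ (k + 1) + c * ((n + 1).multichoose k * c ^ k) :=
          add_le_add (hF (k + 1))
            (mul_le_mul ha ih (norm_nonneg _) ((norm_nonneg a).trans ha))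
      _ = (n + 1).multichoose (k + 1) * c ^ (k + 1) := by
          rw [Nat.multichoose_succ_succ]
          push_cast
          ring

lemma norm_coeff_le_multichoose_card_of_prod_one_sub_mul_eq_one [NormOneClass R] (s : Multiset R)
    (hs : ∀ a ∈ s, ‖a‖ ≤ c) {F : PowerSeries R}
    (hF : (s.map fun a ↦ 1 - PowerSeries.C a * PowerSeries.X).prod * F = 1) (k : ℕ) :
    ‖PowerSeries.coeff k F‖ ≤ s.card.multichoose k * c ^ k := by
  induction s using Multiset.induction_on generalizing F k with
  | empty =>
    obtain rfl : F = 1 := by simpa using hF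
    cases k <;> simp [PowerSeries.coeff_one]
  | cons a s ih =>
    rw [Multiset.card_cons]
    refine norm_coeff_le_multichoose_succ_of_one_sub_mul (hs a (Multiset.mem_cons_self a s))
      (ih (fun b hb ↦ hs b (Multiset.mem_cons_of_mem hb)) ?_) k
    rwa [Multiset.map_cons, Multiset.prod_cons, mul_right_comm, mul_comm] at hF

end NormedRing

lemma eq_C_coeff_zero_mul_prod_one_sub_inv_root {K : Type*} [Field K] {p : K[X]} (hp : p.Splits)
    (h0 : p.coeff 0 ≠ 0) :
    p = C (p.coeff 0) * (p.roots.map fun ρ ↦ 1 - C ρ⁻¹ * X).prod := by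
  have root_ne_zero : ∀ ρ ∈ p.roots, ρ ≠ 0 := by
    rintro ρ hρ rfl
    exact h0 (by simpa [coeff_zero_eq_eval_zero] using (isRoot_of_mem_roots hρ).eq_zero)
  have linear_factor : ∀ ρ ∈ p.roots, X - C ρ = C (-ρ) * (1 - C ρ⁻¹ * X) := by
    intro ρ hρ
    have : (C ρ * C ρ⁻¹ : K[X]) = 1 := by
      rw [← C_mul, mul_inv_cancel₀ (root_ne_zero ρ hρ), C_1]
    rw [C_neg]
    linear_combination -X * this
  have coeff_zero : p.coeff 0 = p.leadingCoeff * (p.roots.map fun ρ ↦ -ρ).prod := by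
    simpa [coeff_zero_eq_eval_zero] using hp.eval_eq_prod_roots 0
  calc p = C p.leadingCoeff * (p.roots.map fun ρ ↦ X - C ρ).prod := hp.eq_prod_roots
    _ = C p.leadingCoeff *
        ((p.roots.map fun ρ ↦ C (-ρ)).prod * (p.roots.map fun ρ ↦ 1 - C ρ⁻¹ * X).prod) := by
      rw [Multiset.map_congr rfl linear_factor, Multiset.prod_map_mul]
    _ = C (p.coeff 0) * (p.roots.map fun ρ ↦ 1 - C ρ⁻¹ * X).prod := by
      rw [coeff_zero, C_mul, map_multiset_prod, Multiset.map_map, mul_assoc]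
      rfl

theorem abs_inv_coeff_le_choose_general {K : Type*} [NormedField K] {p : K[X]} (hp : p.Splits)
    (h0 : p.coeff 0 = 1) {r : ℝ} (hr : 0 < r) (hroots : ∀ ρ, p.IsRoot ρ → r ≤ ‖ρ‖) (k : ℕ) :
    ‖PowerSeries.coeff k (p : PowerSeries K)⁻¹‖ ≤
      ((p.natDegree + k - 1).choose k : ℝ) * r⁻¹ ^ k := by
  have inv_roots_le : ∀ a ∈ p.roots.map (·⁻¹), ‖a‖ ≤ r⁻¹ := by
    intro a ha
    obtain ⟨ρ, hρ, rfl⟩ := Multiset.mem_map.mp ha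
    rw [norm_inv]
    exact inv_anti₀ hr (hroots ρ (isRoot_of_mem_roots hρ))
  have factorization : (p : PowerSeries K) =
      ((p.roots.map (·⁻¹)).map fun a ↦ 1 - PowerSeries.C a * PowerSeries.X).prod := by
    have := congrArg coeToPowerSeries.ringHom
      (eq_C_coeff_zero_mul_prod_one_sub_inv_root hp (h0 ▸ one_ne_zero))
    simpa [h0, map_multiset_prod, Function.comp_def] using this
  have mul_inv : (p : PowerSeries K) * (p : PowerSeries K)⁻¹ = 1 :=
    PowerSeries.mul_inv_cancel _ (by simp [h0])
  nth_rw 1 [factorization] at mul_inv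
  rw [← Nat.multichoose_eq, hp.natDegree_eq_card_roots, ← Multiset.card_map (·⁻¹) p.roots]
  exact norm_coeff_le_multichoose_card_of_prod_one_sub_mul_eq_one _ inv_roots_le mul_inv k

lemma rhoMin_le_norm {p : ℂ[X]} {ρ : ℂ} (hρ : p.IsRoot ρ) : rhoMin p ≤ ‖ρ‖ :=
  csInf_le ⟨0, by rintro _ ⟨z, -, rfl⟩; exact norm_nonneg z⟩ ⟨ρ, hρ, rfl⟩

lemma exists_isRoot_norm_eq_rhoMin {p : ℂ[X]} (hp : 0 < p.degree) :
    ∃ ρ, p.IsRoot ρ ∧ ‖ρ‖ = rhoMin p := by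
  have norms_eq : {x : ℝ | ∃ ρ : ℂ, p.eval ρ = 0 ∧ x = ‖ρ‖} = norm '' {ρ | p.IsRoot ρ} := by
    ext x
    simp [IsRoot, eq_comm]
  have nonempty : {ρ | p.IsRoot ρ}.Nonempty := Complex.exists_root hp
  have finite : {ρ | p.IsRoot ρ}.Finite := finite_setOfPred_isRoot (ne_zero_of_degree_gt hp)
  rw [rhoMin, norms_eq]
  exact (nonempty.image norm).csInf_mem (finite.image norm)

lemma rhoMin_pos {p : ℂ[X]} (hp : 0 < p.degree) (h0 : p.coeff 0 ≠ 0) : 0 < rhoMin p := by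
  obtain ⟨ρ, hρ, hnorm⟩ := exists_isRoot_norm_eq_rhoMin hp
  rw [← hnorm, norm_pos_iff]
  rintro rfl
  exact h0 (by rwa [coeff_zero_eq_eval_zero])

/-- if p has degree n, constant term 1, and b_k is the k-th Maclaurin
coefficient of 1/p, then |b_k| ≤ C(n+k-1, k) · ρ_min^(-k). -/
theorem abs_inv_coeff_le_choose
    (n : ℕ) (hn : 0 < n) (p : Polynomial ℂ) (hdeg : p.natDegree = n) (h0 : p.coeff 0 = 1)
    (k : ℕ) :
    ‖(PowerSeries.coeff (R := ℂ) k) ((p : PowerSeries ℂ))⁻¹‖ ≤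
      ((n + k - 1).choose k : ℝ) * (rhoMin p)⁻¹ ^ k := by
  subst hdeg
  exact abs_inv_coeff_le_choose_general (IsAlgClosed.splits p) h0
    (rhoMin_pos (natDegree_pos_iff_degree_pos.mp hn) (h0 ▸ one_ne_zero))
    (fun _ ↦ rhoMin_le_norm) k
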